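/- Let φ be a nonnegative measurable function on the Lorentz cone Λ₃ and let μ be the measure on the tube T_{Λ₃} given by dμ(x+iy) = φ(y) dx dy. Then there exists a constant C > 0 such that ∫_{T_{Λ₃}} |F(z)|² dμ(z) ≤ C ‖F‖²_{H²(T_{Λ₃})} for every F ∈ H²(T_{Λ₃}) if and only if φ is integrable on Λ₃, i.e. ∫_{Λ₃} φ(y) dy < ∞. -/

import Mathlib

/-!
If `F` has finite Hardy norm, each slice integral `∫ |F(x + iy)|² dx` is at most `‖F‖²`, so the
total mass of `φ(y) dy` is a Carleson constant. It is also the least one. The cone lies in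
`{y | ∀ i, 0 ≤ (M y)ᵢ}` for some invertible matrix `M`; take `F_s(z) = ∏ᵢ ((M z)ᵢ + i s)⁻¹`. The
change of variables `u = M x` gives `∫ |F_s(x + iy)|² dx = |det M|⁻¹ ∏ᵢ π / ((M y)ᵢ + s)`. Hence the
slice integrals, divided by `‖F_s‖²`, are at least `∏ᵢ s / ((M y)ᵢ + s)`, which tends to `1` as
`s → ∞`, and Fatou's lemma bounds the total mass by any Carleson constant.
-/

open MeasureTheory Set
open scoped ENNReal NNReal

noncomputable section

/-- The Lorentz cone `Λ₃ = {y ∈ ℝ³ : y₁ + y₂ > 0, y₁² − y₂² − y₃² > 0}`. -/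
def Lambda3 : Set (Fin 3 → ℝ) :=
  {y | 0 < y 0 + y 1 ∧ 0 < (y 0) ^ 2 - (y 1) ^ 2 - (y 2) ^ 2}

/-- The tube domain `T_{Λ₃} = ℝ³ + iΛ₃ ⊂ ℂ³`. -/
def TLambda3 : Set (Fin 3 → ℂ) :=
  {z | (fun i => (z i).im) ∈ Lambda3}

/-- Square of the Hardy space `H²(T_{Λ₃})` norm:
`‖F‖² = sup_{y ∈ Λ₃} ∫_{ℝ³} |F(x+iy)|² dx`. -/
def hardyNormSq (F : (Fin 3 → ℂ) → ℂ) : ℝ≥0∞ :=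
  ⨆ y ∈ Lambda3,
    ∫⁻ x : Fin 3 → ℝ, (‖F (fun i => (x i : ℂ) + (y i : ℂ) * Complex.I)‖₊ : ℝ≥0∞) ^ 2

open Filter Topology
open scoped Matrix Real

section ProductIntegrals

variable {ι : Type*} [Fintype ι]

lemma lintegral_fintype_prod_ofReal {E : ι → Type*} [∀ i, MeasurableSpace (E i)]
    {μ : (i : ι) → Measure (E i)} [∀ i, SigmaFinite (μ i)] {f : (i : ι) → E i → ℝ}
    (hf : ∀ i, Integrable (f i) (μ i)) (hf_nonneg : ∀ i t, 0 ≤ f i t) :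
    ∫⁻ u, ∏ i, ENNReal.ofReal (f i (u i)) ∂Measure.pi μ
      = ∏ i, ENNReal.ofReal (∫ t, f i t ∂μ i) := by
  simp_rw [← ENNReal.ofReal_prod_of_nonneg fun i _ => hf_nonneg i _]
  rw [← ofReal_integral_eq_lintegral_ofReal (Integrable.fintype_prod_dep hf)
      (ae_of_all _ fun u => Finset.prod_nonneg fun i _ => hf_nonneg i _),
    integral_fintype_prod_eq_prod,
    ENNReal.ofReal_prod_of_nonneg fun i _ => integral_nonneg (hf_nonneg i)]

lemma inv_sq_add_sq_eq_inv_sq_mul {a : ℝ} (ha : a ≠ 0) (t : ℝ) :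
    (t ^ 2 + a ^ 2)⁻¹ = (a ^ 2)⁻¹ * (1 + (t / a) ^ 2)⁻¹ := by
  field

lemma integrable_inv_sq_add_sq {a : ℝ} (ha : a ≠ 0) :
    Integrable fun t : ℝ => (t ^ 2 + a ^ 2)⁻¹ := by
  simp_rw [inv_sq_add_sq_eq_inv_sq_mul ha]
  exact (integrable_inv_one_add_sq.comp_div ha).const_mul _

lemma integral_univ_inv_sq_add_sq {a : ℝ} (ha : a ≠ 0) :
    ∫ t : ℝ, (t ^ 2 + a ^ 2)⁻¹ = π / |a| := by
  simp_rw [inv_sq_add_sq_eq_inv_sq_mul ha]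
  rw [integral_const_mul, Measure.integral_comp_div (fun t => (1 + t ^ 2)⁻¹),
    integral_univ_inv_one_add_sq, smul_eq_mul, ← sq_abs]
  field

lemma lintegral_prod_inv_sq_add_sq {a : ι → ℝ} (ha : ∀ i, 0 < a i) :
    ∫⁻ u : ι → ℝ, ∏ i, ENNReal.ofReal ((u i ^ 2 + a i ^ 2)⁻¹)
      = ∏ i, ENNReal.ofReal (π / a i) := by
  rw [volume_pi, lintegral_fintype_prod_ofReal (f := fun i t => (t ^ 2 + a i ^ 2)⁻¹)
    (fun i => integrable_inv_sq_add_sq (ha i).ne') fun i t => by positivity]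
  simp_rw [integral_univ_inv_sq_add_sq (ha _).ne', abs_of_pos (ha _)]

lemma lintegral_comp_mulVec [DecidableEq ι] {M : Matrix ι ι ℝ} (hM : M.det ≠ 0)
    {f : (ι → ℝ) → ℝ≥0∞} (hf : Measurable f) :
    ∫⁻ x, f (M *ᵥ x) = ENNReal.ofReal |M.det⁻¹| * ∫⁻ u, f u := by
  have hmap := Real.map_matrix_volume_pi_eq_smul_volume_pi hM
  rw [← smul_eq_mul, ← lintegral_smul_measure, ← hmap,
    lintegral_map hf (Matrix.toLin' M).continuous_of_finiteDimensional.measurable]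
  rfl

end ProductIntegrals

section HardySpace

variable {ι : Type*}

/-- The tube domain `ℝ^ι + iΛ ⊂ ℂ^ι` over a base `Λ ⊂ ℝ^ι`; for `Λ = Λ₃` it is
`TLambda3`. -/
def tubeDomain (Λ : Set (ι → ℝ)) : Set (ι → ℂ) :=
  {z | (fun i => (z i).im) ∈ Λ}

variable [Fintype ι]

/-- The squared `L²` norm `∫ |F(x + iy)|² dx` of the restriction of `F` to the horizontal slice
`ℝ^ι + iy` of a tube domain, with values in `[0, ∞]`. -/
def sliceNormSq (F : (ι → ℂ) → ℂ) (y : ι → ℝ) : ℝ≥0∞ :=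
  ∫⁻ x : ι → ℝ, ‖F fun i => x i + y i * Complex.I‖ₑ ^ 2

/-- The squared norm of `F` in the Hardy space `H²` of the tube domain over `Λ`; for `Λ = Λ₃` it is
`hardyNormSq`. It is `∞` on functions outside the Hardy space. -/
def tubeHardyNormSq (Λ : Set (ι → ℝ)) (F : (ι → ℂ) → ℂ) : ℝ≥0∞ :=
  ⨆ y ∈ Λ, sliceNormSq F y

lemma sliceNormSq_le_tubeHardyNormSq {Λ : Set (ι → ℝ)} (F : (ι → ℂ) → ℂ) {y : ι → ℝ} (hy : y ∈ Λ) :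
    sliceNormSq F y ≤ tubeHardyNormSq Λ F :=
  le_iSup₂ (f := fun y (_ : y ∈ Λ) => sliceNormSq F y) y hy

lemma setLIntegral_sliceNormSq_le (ν : Measure (ι → ℝ)) (Λ : Set (ι → ℝ)) (F : (ι → ℂ) → ℂ) :
    ∫⁻ y in Λ, sliceNormSq F y ∂ν ≤ ν Λ * tubeHardyNormSq Λ F := by
  rw [mul_comm, ← setLIntegral_const]
  exact setLIntegral_mono measurable_const fun y hy => sliceNormSq_le_tubeHardyNormSq F hy

end HardySpace

section CauchyKernel

variable {ι : Type*} [Fintype ι] {M : Matrix ι ι ℝ} {s : ℝ} {y : ι → ℝ} {Λ : Set (ι → ℝ)}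

/-- The function `z ↦ ∏ᵢ ((M z)ᵢ + i s)⁻¹`, which is up to a constant factor the Cauchy kernel of
the tube over the simplicial cone `{y | ∀ i, 0 < (M y)ᵢ}`, with pole shifted out of the closed tube
by `s`. These are the test functions for Carleson measures. -/
def cauchyKernel (M : Matrix ι ι ℝ) (s : ℝ) (z : ι → ℂ) : ℂ :=
  ∏ i, ((M.map Complex.ofReal *ᵥ z) i + s * Complex.I)⁻¹

lemma re_map_ofReal_mulVec (M : Matrix ι ι ℝ) (z : ι → ℂ) (i : ι) :
    ((M.map Complex.ofReal *ᵥ z) i).re = (M *ᵥ fun j => (z j).re) i := by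
  simp [Matrix.mulVec, dotProduct]

lemma im_map_ofReal_mulVec (M : Matrix ι ι ℝ) (z : ι → ℂ) (i : ι) :
    ((M.map Complex.ofReal *ᵥ z) i).im = (M *ᵥ fun j => (z j).im) i := by
  simp [Matrix.mulVec, dotProduct]

lemma differentiableOn_cauchyKernel (h : ∀ y ∈ Λ, ∀ i, 0 < (M *ᵥ y) i + s) :
    DifferentiableOn ℂ (cauchyKernel M s) (tubeDomain Λ) := by
  have hfactor (i : ι) : DifferentiableOn ℂ
      (fun z => ((M.map Complex.ofReal *ᵥ z) i + s * Complex.I)⁻¹) (tubeDomain Λ) := by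
    refine DifferentiableOn.fun_inv ?_ fun z hz h0 => ?_
    · unfold Matrix.mulVec dotProduct
      fun_prop
    · have him := congrArg Complex.im h0
      simp only [Complex.add_im, im_map_ofReal_mulVec, Complex.mul_I_im, Complex.ofReal_re,
        Complex.zero_im] at him
      exact (h _ hz i).ne' him
  classical
  exact fun z hz => (HasFDerivWithinAt.finsetProd fun i _ =>
    (hfactor i z hz).hasFDerivWithinAt).differentiableWithinAt

lemma enorm_inv_add_mul_I_sq (a b : ℝ) :
    ‖((a : ℂ) + b * Complex.I)⁻¹‖ₑ ^ 2 = ENNReal.ofReal ((a ^ 2 + b ^ 2)⁻¹) := by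
  rw [← ofReal_norm, ← ENNReal.ofReal_pow (norm_nonneg _), norm_inv, inv_pow,
    ← Complex.normSq_eq_norm_sq, Complex.normSq_add_mul_I]

lemma enorm_cauchyKernel_sq (M : Matrix ι ι ℝ) (s : ℝ) (x y : ι → ℝ) :
    ‖cauchyKernel M s fun i => x i + y i * Complex.I‖ₑ ^ 2
      = ∏ i, ENNReal.ofReal (((M *ᵥ x) i ^ 2 + ((M *ᵥ y) i + s) ^ 2)⁻¹) := by
  have hfactor (i : ι) : (M.map Complex.ofReal *ᵥ fun i => x i + y i * Complex.I) i + s * Complex.I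
      = ((M *ᵥ x) i : ℝ) + (((M *ᵥ y) i + s : ℝ) : ℂ) * Complex.I := by
    apply Complex.ext <;> simp [re_map_ofReal_mulVec, im_map_ofReal_mulVec]
  simp_rw [cauchyKernel, hfactor, ← enorm_inv_add_mul_I_sq, Finset.prod_pow, enorm, nnnorm_prod,
    ENNReal.ofNNReal_finsetProd]

variable [DecidableEq ι]

lemma sliceNormSq_cauchyKernel (hM : M.det ≠ 0) (h : ∀ i, 0 < (M *ᵥ y) i + s) :
    sliceNormSq (cauchyKernel M s) y
      = ENNReal.ofReal |M.det⁻¹| * ∏ i, ENNReal.ofReal (π / ((M *ᵥ y) i + s)) := by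
  simp_rw [sliceNormSq, enorm_cauchyKernel_sq]
  rw [lintegral_comp_mulVec hM
    (f := fun u => ∏ i, ENNReal.ofReal ((u i ^ 2 + ((M *ᵥ y) i + s) ^ 2)⁻¹)) (by fun_prop),
    lintegral_prod_inv_sq_add_sq h]

lemma sliceNormSq_cauchyKernel_zero (hM : M.det ≠ 0) (hs : 0 < s) :
    sliceNormSq (cauchyKernel M s) 0
      = ENNReal.ofReal |M.det⁻¹| * ENNReal.ofReal (π / s) ^ Fintype.card ι := by
  rw [sliceNormSq_cauchyKernel hM (by simpa using fun _ => hs)]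
  simp

lemma sliceNormSq_cauchyKernel_eq_mul_zero (hM : M.det ≠ 0) (hs : 0 < s)
    (h : ∀ i, 0 < (M *ᵥ y) i + s) :
    sliceNormSq (cauchyKernel M s) y
      = ENNReal.ofReal (∏ i, s / ((M *ᵥ y) i + s)) * sliceNormSq (cauchyKernel M s) 0 := by
  have hratio (i : ι) : ENNReal.ofReal (π / ((M *ᵥ y) i + s))
      = ENNReal.ofReal (s / ((M *ᵥ y) i + s)) * ENNReal.ofReal (π / s) := by
    rw [← ENNReal.ofReal_mul (div_pos hs (h i)).le]
    congr 1
    field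
  rw [ENNReal.ofReal_prod_of_nonneg fun i _ => (div_pos hs (h i)).le,
    sliceNormSq_cauchyKernel hM h, sliceNormSq_cauchyKernel_zero hM hs]
  simp_rw [hratio, Finset.prod_mul_distrib, Finset.prod_const, Finset.card_univ]
  ring

lemma sliceNormSq_cauchyKernel_zero_ne_zero (hM : M.det ≠ 0) (hs : 0 < s) :
    sliceNormSq (cauchyKernel M s) 0 ≠ 0 := by
  have hpos : 0 < π / s := by positivity
  simp [sliceNormSq_cauchyKernel_zero hM hs, hM, hpos]

lemma sliceNormSq_cauchyKernel_zero_ne_top (hM : M.det ≠ 0) (hs : 0 < s) :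
    sliceNormSq (cauchyKernel M s) 0 ≠ ⊤ := by
  rw [sliceNormSq_cauchyKernel_zero hM hs]
  exact ENNReal.mul_ne_top ENNReal.ofReal_ne_top (ENNReal.pow_ne_top ENNReal.ofReal_ne_top)

lemma tubeHardyNormSq_cauchyKernel_le (hM : M.det ≠ 0) (hΛ : ∀ y ∈ Λ, ∀ i, 0 ≤ (M *ᵥ y) i)
    (hs : 0 < s) :
    tubeHardyNormSq Λ (cauchyKernel M s) ≤ sliceNormSq (cauchyKernel M s) 0 := by
  refine iSup₂_le fun y hy => ?_
  rw [sliceNormSq_cauchyKernel_eq_mul_zero hM hs fun i => add_pos_of_nonneg_of_pos (hΛ y hy i) hs]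
  refine mul_le_of_le_one_left' (ENNReal.ofReal_le_one.2 (Finset.prod_le_one ?_ ?_)) <;> intro i _
  · have := hΛ y hy i
    positivity
  · exact div_le_one_of_le₀ (by linarith [hΛ y hy i]) (by linarith [hΛ y hy i])

end CauchyKernel

section RadialCarleson

variable {ι : Type*} [Fintype ι] {M : Matrix ι ι ℝ} {Λ : Set (ι → ℝ)}
  {ν : Measure (ι → ℝ)} {C : ℝ≥0∞}

lemma tendsto_prod_div_add_atTop (b : ι → ℝ) :
    Tendsto (fun s : ℝ => ∏ i, s / (b i + s)) atTop (𝓝 1) := by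
  have hfactor (i : ι) : Tendsto (fun s : ℝ => s / (b i + s)) atTop (𝓝 1) := by
    have hlim : Tendsto (fun s : ℝ => 1 - b i / (b i + s)) atTop (𝓝 (1 - 0)) :=
      tendsto_const_nhds.sub <|
        tendsto_const_nhds.div_atTop (tendsto_atTop_add_const_left _ _ tendsto_id)
    rw [sub_zero] at hlim
    refine hlim.congr' ?_
    filter_upwards [eventually_gt_atTop (-b i)] with s hs
    have hne : b i + s ≠ 0 := by linarith
    field
  simpa using tendsto_finsetProd Finset.univ fun i _ => hfactor i

/-- `dx dν(y)` is a Carleson measure with constant `C` for the Hardy space `H²` of the tube over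
`Λ`. The measure on the tube is encoded by integrating the slice norms against `ν`. -/
def IsRadialCarlesonConst (Λ : Set (ι → ℝ)) (ν : Measure (ι → ℝ)) (C : ℝ≥0∞) : Prop :=
  ∀ F : (ι → ℂ) → ℂ, DifferentiableOn ℂ F (tubeDomain Λ) → tubeHardyNormSq Λ F < ⊤ →
    ∫⁻ y in Λ, sliceNormSq F y ∂ν ≤ C * tubeHardyNormSq Λ F

variable [DecidableEq ι]

lemma IsRadialCarlesonConst.setLIntegral_prod_le (hC : IsRadialCarlesonConst Λ ν C)
    (hΛm : MeasurableSet Λ) (hM : M.det ≠ 0) (hΛ : ∀ y ∈ Λ, ∀ i, 0 ≤ (M *ᵥ y) i)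
    {s : ℝ} (hs : 0 < s) :
    ∫⁻ y in Λ, ENNReal.ofReal (∏ i, s / ((M *ᵥ y) i + s)) ∂ν ≤ C := by
  have hpos : ∀ y ∈ Λ, ∀ i, 0 < (M *ᵥ y) i + s := fun y hy i =>
    add_pos_of_nonneg_of_pos (hΛ y hy i) hs
  have hle := tubeHardyNormSq_cauchyKernel_le hM hΛ hs
  have hne_zero := sliceNormSq_cauchyKernel_zero_ne_zero hM hs
  have hne_top := sliceNormSq_cauchyKernel_zero_ne_top hM hs
  rw [← ENNReal.mul_le_mul_iff_left hne_zero hne_top]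
  calc (∫⁻ y in Λ, ENNReal.ofReal (∏ i, s / ((M *ᵥ y) i + s)) ∂ν)
        * sliceNormSq (cauchyKernel M s) 0
      = ∫⁻ y in Λ, ENNReal.ofReal (∏ i, s / ((M *ᵥ y) i + s))
          * sliceNormSq (cauchyKernel M s) 0 ∂ν := (lintegral_mul_const' _ _ hne_top).symm
    _ = ∫⁻ y in Λ, sliceNormSq (cauchyKernel M s) y ∂ν :=
      setLIntegral_congr_fun hΛm fun y hy =>
        (sliceNormSq_cauchyKernel_eq_mul_zero hM hs (hpos y hy)).symm
    _ ≤ C * tubeHardyNormSq Λ (cauchyKernel M s) :=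
      hC _ (differentiableOn_cauchyKernel hpos) (hle.trans_lt hne_top.lt_top)
    _ ≤ C * sliceNormSq (cauchyKernel M s) 0 := by gcongr

lemma IsRadialCarlesonConst.measure_le (hC : IsRadialCarlesonConst Λ ν C)
    (hΛm : MeasurableSet Λ) (hM : M.det ≠ 0) (hΛ : ∀ y ∈ Λ, ∀ i, 0 ≤ (M *ᵥ y) i) :
    ν Λ ≤ C := by
  let ratio (n : ℕ) (y : ι → ℝ) : ℝ≥0∞ :=
    ENNReal.ofReal (∏ i, ((n : ℝ) + 1) / ((M *ᵥ y) i + ((n : ℝ) + 1)))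
  have hratio_meas (n : ℕ) : Measurable (ratio n) := by
    unfold ratio Matrix.mulVec dotProduct
    fun_prop
  have hratio_lim (y : ι → ℝ) : Tendsto (fun n => ratio n y) atTop (𝓝 1) := by
    have hshift : Tendsto (fun n : ℕ => (n : ℝ) + 1) atTop atTop :=
      tendsto_atTop_add_const_right _ _ tendsto_natCast_atTop_atTop
    rw [← ENNReal.ofReal_one]
    exact ENNReal.tendsto_ofReal ((tendsto_prod_div_add_atTop (M *ᵥ y)).comp hshift)
  calc ν Λ = ∫⁻ y in Λ, liminf (fun n => ratio n y) atTop ∂ν := by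
        simp_rw [(hratio_lim _).liminf_eq, setLIntegral_one]
    _ ≤ liminf (fun n => ∫⁻ y in Λ, ratio n y ∂ν) atTop := lintegral_liminf_le hratio_meas
    _ ≤ C := liminf_le_of_frequently_le' <| .of_forall fun n =>
        hC.setLIntegral_prod_le hΛm hM hΛ n.cast_add_one_pos

theorem isRadialCarlesonConst_iff_measure_le (hΛm : MeasurableSet Λ) (hM : M.det ≠ 0)
    (hΛ : ∀ y ∈ Λ, ∀ i, 0 ≤ (M *ᵥ y) i) : IsRadialCarlesonConst Λ ν C ↔ ν Λ ≤ C := by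
  refine ⟨fun hC => hC.measure_le hΛm hM hΛ, fun hC F _ _ => ?_⟩
  exact (setLIntegral_sliceNormSq_le ν Λ F).trans (by gcongr)

theorem radial_carleson_iff_integrable_general (hΛm : MeasurableSet Λ) (hM : M.det ≠ 0)
    (hΛ : ∀ y ∈ Λ, ∀ i, 0 ≤ (M *ᵥ y) i) :
    (∃ C : ℝ, 0 < C ∧ IsRadialCarlesonConst Λ ν (ENNReal.ofReal C)) ↔ ν Λ < ⊤ := by
  simp_rw [isRadialCarlesonConst_iff_measure_le hΛm hM hΛ]
  refine ⟨fun ⟨C, _, hC⟩ => hC.trans_lt ENNReal.ofReal_lt_top, fun h => ?_⟩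
  refine ⟨(ν Λ).toReal + 1, by positivity, (ENNReal.le_ofReal_iff_toReal_le h.ne ?_).2 ?_⟩
  · positivity
  · linarith

end RadialCarleson

lemma setLIntegral_withDensity_ofReal {α : Type*} [MeasurableSpace α] {μ : Measure α} {φ : α → ℝ}
    {s : Set α} (hφ : AEMeasurable φ (μ.restrict s)) (hs : MeasurableSet s) (f : α → ℝ≥0∞) :
    ∫⁻ y in s, f y ∂μ.withDensity (fun y => ENNReal.ofReal (φ y))
      = ∫⁻ y in s, f y * ENNReal.ofReal (φ y) ∂μ := by
  rw [setLIntegral_withDensity_eq_setLIntegral_mul_non_measurable₀ _ hφ.ennreal_ofReal f hs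
    (ae_of_all _ fun y => ENNReal.ofReal_lt_top)]
  simp_rw [Pi.mul_apply, mul_comm]

section LorentzCone

lemma measurableSet_Lambda3 : MeasurableSet Lambda3 := by
  unfold Lambda3
  measurability

/-- The functionals `y₁ + y₂`, `y₁ - y₂`, `y₁ + y₃`: linearly independent elements of the closed
dual cone of `Λ₃`, so that `Λ₃` lies in the simplicial cone on which all three are positive. -/
def lorentzFunctionals : Matrix (Fin 3) (Fin 3) ℝ :=
  !![1, 1, 0; 1, -1, 0; 1, 0, 1]

lemma det_lorentzFunctionals_ne_zero : lorentzFunctionals.det ≠ 0 := by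
  have hdet : lorentzFunctionals.det = -2 := by
    simp only [lorentzFunctionals, Matrix.det_fin_three, Matrix.of_apply, Matrix.cons_val',
      Matrix.cons_val_fin_one, Matrix.cons_val]
    norm_num
  norm_num [hdet]

lemma lorentzFunctionals_mulVec_pos {y : Fin 3 → ℝ} (hy : y ∈ Lambda3) (i : Fin 3) :
    0 < (lorentzFunctionals *ᵥ y) i := by
  obtain ⟨hadd, hquad⟩ := hy
  have hsub : 0 < y 0 - y 1 := by
    have hmul : 0 < (y 0 + y 1) * (y 0 - y 1) := by linarith [sq_nonneg (y 2)]
    exact (pos_iff_pos_of_mul_pos hmul).1 hadd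
  have habs : |y 2| < y 0 :=
    abs_lt_of_sq_lt_sq (by linarith [sq_nonneg (y 1)]) (by linarith)
  fin_cases i
  · simpa [lorentzFunctionals, Matrix.mulVec, dotProduct, Fin.sum_univ_three] using hadd
  · simpa [lorentzFunctionals, Matrix.mulVec, dotProduct, Fin.sum_univ_three,
      ← sub_eq_add_neg] using hsub
  · simpa [lorentzFunctionals, Matrix.mulVec, dotProduct, Fin.sum_univ_three,
      neg_lt_iff_pos_add'] using neg_lt_of_abs_lt habs

end LorentzCone

/-- for a nonnegative measurable `φ` on `Λ₃`, the measure
`dμ(x+iy) = φ(y) dx dy` on `T_{Λ₃}` is a Carleson measure for `H²(T_{Λ₃})`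
(i.e. `∫_{T_{Λ₃}} |F|² dμ ≤ C‖F‖²_{H²}` for all `F ∈ H²`) iff `φ` is integrable on `Λ₃`. -/
theorem radial_carleson_iff_integrable
    (φ : (Fin 3 → ℝ) → ℝ) (hφm : Measurable φ) (hφ : ∀ y, 0 ≤ φ y) :
    (∃ C : ℝ, 0 < C ∧ ∀ F : (Fin 3 → ℂ) → ℂ,
        DifferentiableOn ℂ F TLambda3 → hardyNormSq F < ⊤ →
        (∫⁻ y in Lambda3,
            (∫⁻ x : Fin 3 → ℝ,
              (‖F (fun i => (x i : ℂ) + (y i : ℂ) * Complex.I)‖₊ : ℝ≥0∞) ^ 2)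
              * ENNReal.ofReal (φ y))
          ≤ ENNReal.ofReal C * hardyNormSq F)
    ↔ (∫⁻ y in Lambda3, ENNReal.ofReal (φ y)) < ⊤ := by
  simpa only [IsRadialCarlesonConst, withDensity_apply _ measurableSet_Lambda3,
    setLIntegral_withDensity_ofReal hφm.aemeasurable measurableSet_Lambda3] using!
    radial_carleson_iff_integrable_general (ν := volume.withDensity fun y => ENNReal.ofReal (φ y))
      measurableSet_Lambda3 det_lorentzFunctionals_ne_zero
      fun y hy i => (lorentzFunctionals_mulVec_pos hy i).le
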